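/- arXiv:2012.13943 — 2 statements merged into one kernel-verified Lean document; each statement's English description precedes it below -/
import Mathlib

section
/- Let n ∈ ℕ and let D be a symmetric n×n real matrix. Let τ ∈ ℝ, P⁺, P, Q⁺, Q, h ∈ ℝⁿ and r⁺, r ∈ ℝ. Define G₁ ∈ ℝⁿ by (G₁)ⱼ = hⱼ·((Q⁺+Q)/2)ⱼ and G₂ ∈ ℝⁿ by (G₂)ⱼ = hⱼ·((P⁺+P)/2)ⱼ for each j. If P⁺ − P = τ·(−D·((Q⁺+Q)/2) + ((r⁺+r)/2)·G₁) and Q⁺ − Q = τ·(D·((P⁺+P)/2) − ((r⁺+r)/2)·G₂), then ‖P⁺‖² + ‖Q⁺‖² = ‖P‖² + ‖Q‖², where ‖·‖ is the Euclidean norm. -/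
/-- Conservation of the discrete L² norm (mass) by the CN-SAV scheme when the
nonlinear terms have the pointwise multiplier form of the Gross–Pitaevskii
nonlinearity. -/
theorem sav_mass_conservation_pointwise_multiplier
    (n : ℕ) (D : Matrix (Fin n) (Fin n) ℝ) (hD : D.IsSymm)
    (τ : ℝ) (Pp P Qp Q h G₁ G₂ : EuclideanSpace ℝ (Fin n)) (rp r : ℝ)
    (hG₁ : ∀ j : Fin n, G₁ j = h j * (((2:ℝ)⁻¹ • (Qp + Q)) j))
    (hG₂ : ∀ j : Fin n, G₂ j = h j * (((2:ℝ)⁻¹ • (Pp + P)) j))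
    (hP : Pp - P =
      τ • (-(Matrix.toEuclideanLin D ((2:ℝ)⁻¹ • (Qp + Q))) + ((rp + r)/2) • G₁))
    (hQ : Qp - Q =
      τ • (Matrix.toEuclideanLin D ((2:ℝ)⁻¹ • (Pp + P)) - ((rp + r)/2) • G₂)) :
    ‖Pp‖^2 + ‖Qp‖^2 = ‖P‖^2 + ‖Q‖^2 := by
  have key : ∀ X Y : EuclideanSpace ℝ (Fin n),
      ‖X‖^2 - ‖Y‖^2 = 2 * inner ℝ ((2:ℝ)⁻¹ • (X + Y)) (X - Y) := by
    intro X Y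
    rw [inner_smul_left, inner_add_left, inner_sub_right, inner_sub_right,
      real_inner_self_eq_norm_sq, real_inner_self_eq_norm_sq, real_inner_comm X Y]
    simp
  have k1 := key Pp P
  have k2 := key Qp Q
  rw [hP] at k1
  rw [hQ] at k2
  generalize (2:ℝ)⁻¹ • (Pp + P) = A at *
  generalize (2:ℝ)⁻¹ • (Qp + Q) = B at *
  have hH : D.IsHermitian := by
    rw [Matrix.IsHermitian, Matrix.conjTranspose_eq_transpose_of_trivial]
    exact hD
  have hsym : inner ℝ A (Matrix.toEuclideanLin D B) = inner ℝ B (Matrix.toEuclideanLin D A) := by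
    rw [real_inner_comm]
    exact (Matrix.isSymmetric_toEuclideanLin_iff.mpr hH) B A
  have hG : inner ℝ A G₁ = inner ℝ B G₂ := by
    simp only [PiLp.inner_apply, hG₁, hG₂]
    refine Finset.sum_congr rfl fun j _ => ?_
    simp
    ring
  rw [inner_smul_right, inner_add_right, inner_neg_right, inner_smul_right, hsym, hG] at k1
  rw [inner_smul_right, inner_sub_right, inner_smul_right] at k2
  linarith
end

section
/- Let E be a real inner product space, J : E → E a linear map, τ ≠ 0, Zᵏ, B, G ∈ E and rᵏ ∈ ℝ. Suppose Z₁, Z₂ ∈ E satisfy (2/τ)·Z₁ + J(Z₁) = (2/τ)·Zᵏ and (2/τ)·Z₂ + J(Z₂) = −B, and that 2 − ⟨G, Z₂⟩ ≠ 0. Define r^{1/2} := (2·rᵏ + ⟨G, Z₁ − Zᵏ⟩)/(2 − ⟨G, Z₂⟩), Z^{1/2} := Z₁ + r^{1/2}·Z₂, Z^{k+1} := 2·Z^{1/2} − Zᵏ, and r^{k+1} := 2·r^{1/2} − rᵏ. Then (Z^{k+1} − Zᵏ)/τ = −J(Z^{1/2}) − r^{1/2}·B and r^{k+1} − rᵏ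 = ½·⟨G, Z^{k+1} − Zᵏ⟩. -/
open scoped RealInnerProductSpace

/-- Correctness of Algorithm 2 for solving the fully discrete CN-SAV system. -/
theorem sav_algorithm_two_correct
    {E : Type*} [NormedAddCommGroup E] [InnerProductSpace ℝ E]
    (J : E →ₗ[ℝ] E) (τ : ℝ) (hτ : τ ≠ 0) (Zk B G : E) (rk : ℝ)
    (Z₁ Z₂ : E)
    (h1 : (2/τ) • Z₁ + J Z₁ = (2/τ) • Zk)
    (h2 : (2/τ) • Z₂ + J Z₂ = -B)
    (hden : 2 - ⟪G, Z₂⟫ ≠ 0) :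
    let rhalf : ℝ := (2 * rk + ⟪G, Z₁ - Zk⟫) / (2 - ⟪G, Z₂⟫)
    let Zhalf : E := Z₁ + rhalf • Z₂
    let Zk1 : E := (2:ℝ) • Zhalf - Zk
    let rk1 : ℝ := 2 * rhalf - rk
    τ⁻¹ • (Zk1 - Zk) = -(J Zhalf) - rhalf • B ∧
      rk1 - rk = (1/2) * ⟪G, Zk1 - Zk⟫ := by
  intro rhalf Zhalf Zk1 rk1
  have hr : rhalf * (2 - ⟪G, Z₂⟫) = 2 * rk + ⟪G, Z₁ - Zk⟫ := div_mul_cancel₀ _ hden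
  have e1 : J Z₁ = (2/τ) • Zk - (2/τ) • Z₁ := by rw [← h1]; abel
  have e2 : B = -((2/τ) • Z₂ + J Z₂) := by rw [h2, neg_neg]
  clear_value rhalf
  constructor
  · simp only [Zk1, Zhalf, map_add, map_smul, e1, e2]
    module
  · have hZ : Zk1 - Zk = (2:ℝ) • ((Z₁ - Zk) + rhalf • Z₂) := by
      simp only [Zk1, Zhalf]
      module
    rw [hZ, real_inner_smul_right, inner_add_right, real_inner_smul_right]
    simp only [rk1]
    linarith
end
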